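/- Let L₁, L₂, C₁, C₂, f₁, f₂, R be strictly positive reals and β₁, β₂ reals, and suppose (1 − β₁)·L₁·C₁/f₁ = (1 − β₂)·L₂·C₂/f₂ and (1 − β₁)·L₁·C₁/f₁ = (β₁L₁ + β₂L₂)/R. Then (β₁L₁ + β₂L₂)/R = (L₁ + L₂)/(f₁/C₁ + f₂/C₂ + R), provided f₁/C₁ + f₂/C₂ + R ≠ 0 (which holds since all quantities are positive). -/

import Mathlib

/-! Local computing and offloading all run in parallel for the same time `T`, user `m` clearing
bits locally at rate `f m / C m` and all users together offloading at rate `R`. Hence the total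
number of bits is `T` times the total rate. -/

theorem sum_eq_mul_sum_of_forall_div_eq {ι K : Type*} [DivisionSemiring K] {s : Finset ι}
    {a b : ι → K} {t : K} (hb : ∀ i ∈ s, b i ≠ 0) (h : ∀ i ∈ s, a i / b i = t) :
    ∑ i ∈ s, a i = t * ∑ i ∈ s, b i := by
  rw [Finset.mul_sum]
  exact Finset.sum_congr rfl fun i hi ↦ (div_eq_iff (hb i hi)).mp (h i hi)

theorem stmt_5_general {ι K : Type*} [Fintype ι] [Field K] (L C f β : ι → K) (R : K)
    (hC : ∀ i, C i ≠ 0) (hf : ∀ i, f i ≠ 0) (hR : R ≠ 0) (hrate : ∑ i, f i / C i + R ≠ 0)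
    (h : ∀ i, (1 - β i) * L i * C i / f i = (∑ j, β j * L j) / R) :
    (∑ i, β i * L i) / R = (∑ i, L i) / (∑ i, f i / C i + R) := by
  set T := (∑ i, β i * L i) / R
  have offloaded_bits : ∑ i, β i * L i = T * R := (div_mul_cancel₀ _ hR).symm
  have local_bits : ∑ i, (1 - β i) * L i = T * ∑ i, f i / C i :=
    sum_eq_mul_sum_of_forall_div_eq (fun i _ ↦ div_ne_zero (hf i) (hC i))
      fun i _ ↦ (div_div_eq_mul_div _ _ _).trans (h i)
  rw [eq_div_iff hrate]
  calc T * (∑ i, f i / C i + R)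
      = ∑ i, (1 - β i) * L i + ∑ i, β i * L i := by rw [mul_add, local_bits, offloaded_bits]
    _ = ∑ i, ((1 - β i) * L i + β i * L i) := Finset.sum_add_distrib.symm
    _ = ∑ i, L i := Finset.sum_congr rfl fun i _ ↦ by ring

/-- Appendix E identity: if each user's local computing time equals the common offloading
time, then the common completion time equals `(L₁+L₂)/(f₁/C₁ + f₂/C₂ + R)`. -/
theorem stmt_5 (L1 L2 C1 C2 f1 f2 R β1 β2 : ℝ)
    (hL1 : 0 < L1) (hL2 : 0 < L2) (hC1 : 0 < C1) (hC2 : 0 < C2)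
    (hf1 : 0 < f1) (hf2 : 0 < f2) (hR : 0 < R)
    (h1 : (1 - β1) * L1 * C1 / f1 = (1 - β2) * L2 * C2 / f2)
    (h2 : (1 - β1) * L1 * C1 / f1 = (β1 * L1 + β2 * L2) / R) :
    (β1 * L1 + β2 * L2) / R = (L1 + L2) / (f1 / C1 + f2 / C2 + R) := by
  have hrate : f1 / C1 + f2 / C2 + R ≠ 0 := by positivity
  simpa using stmt_5_general ![L1, L2] ![C1, C2] ![f1, f2] ![β1, β2] R
    (by simp [hC1.ne', hC2.ne']) (by simp [hf1.ne', hf2.ne']) hR.ne' (by simpa using hrate)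
    (by simpa using ⟨h2, h1.symm.trans h2⟩)
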